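/- Let Θ be a finite set of states, R a finite set of receivers with |R| = n̄ ≥ 2, each r ∈ R with a finite action set A^r of cardinality at most ϱ, where ϱ ≥ 2, and utility u^r : A^r × Θ → [0,1]. Let 0 < ε ≤ 1, 0 < δ ≤ 1, p* ∈ Δ_Θ, and k = ⌈32·ln(4·n̄·ϱ/δ)/ε²⌉. Let γ̃ be the empirical distribution of k i.i.d. samples drawn from p*, and let P = {p ∈ Δ_Θ : |Σ_θ p_θ·u^r(a,θ) − Σ_θ p*_θ·u^r(a,θ)| ≤ ε/2 for every receiver r and every a ∈ A^r}. Then for every θ ∈ Θ, E[γ̃_θ · 1{γ̃ ∈ P}] ≥ (1 − δ)·p*_θ. -/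

import Mathlib

open Finset

/-- The empirical distribution of a vector `s` of `k` samples from `Θ`:
`empDist s θ` is the fraction of samples equal to `θ`. -/
noncomputable def empDist {Θ : Type*} [Fintype Θ] [DecidableEq Θ] {k : ℕ}
    (s : Fin k → Θ) (θ : Θ) : ℝ :=
  ((Finset.univ.filter fun t => s t = θ).card : ℝ) / k

/-- The total weight of the sample vectors whose `t₀`-th sample is `θ`, with each sample reweighted
by `g`, factors as a product over the samples. -/
lemma sum_prod_mul_ite_eq_prod {Θ : Type*} [Fintype Θ] [DecidableEq Θ] {k : ℕ}
    (g : Θ → ℝ) (t₀ : Fin k) (θ : Θ) :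
    ∑ s : Fin k → Θ, (∏ t, g (s t)) * (if s t₀ = θ then 1 else 0) =
      ∏ t, if t = t₀ then g θ else ∑ x, g x := by
  have hfactor : ∀ t, (if t = t₀ then g θ else ∑ x, g x) =
      ∑ x, g x * (if t = t₀ then (if x = θ then 1 else 0) else 1) := by
    intro t
    by_cases h : t = t₀ <;> simp [h]
  simp_rw [hfactor]
  rw [Finset.prod_univ_sum, Fintype.piFinset_univ]
  refine Finset.sum_congr rfl fun s _ => ?_
  rw [Finset.prod_mul_distrib, Finset.prod_ite_eq' Finset.univ t₀]
  simp

/-- A sub-Gaussian bound on the moment generating function of a centered variable in `[-1, 1]`. -/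
lemma sum_mul_exp_le_exp_sq {Θ : Type*} [Fintype Θ] {p f : Θ → ℝ}
    (hp0 : ∀ x, 0 ≤ p x) (hp1 : ∑ x, p x = 1) (hf : ∀ x, |f x| ≤ 1)
    (hmean : ∑ x, p x * f x = 0) {c : ℝ} (hc : |c| ≤ 1) :
    ∑ x, p x * Real.exp (c * f x) ≤ Real.exp (c ^ 2) := by
  have hexp : ∀ x, Real.exp (c * f x) ≤ 1 + c * f x + c ^ 2 := by
    intro x
    have hle : |c * f x| ≤ 1 := by
      rw [abs_mul]
      exact mul_le_one₀ hc (abs_nonneg _) (hf x)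
    have hquad := (abs_le.mp (Real.abs_exp_sub_one_sub_id_le hle)).2
    have hsq : f x ^ 2 ≤ 1 := (sq_le_one_iff_abs_le_one _).mpr (hf x)
    nlinarith [mul_le_mul_of_nonneg_left hsq (sq_nonneg c)]
  calc ∑ x, p x * Real.exp (c * f x)
      ≤ ∑ x, p x * (1 + c * f x + c ^ 2) :=
        Finset.sum_le_sum fun x _ => mul_le_mul_of_nonneg_left (hexp x) (hp0 x)
    _ = (1 + c ^ 2) * ∑ x, p x + c * ∑ x, p x * f x := by
        rw [Finset.mul_sum, Finset.mul_sum, ← Finset.sum_add_distrib]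
        exact Finset.sum_congr rfl fun x _ => by ring
    _ ≤ Real.exp (c ^ 2) := by
        rw [hp1, hmean]
        linarith [Real.add_one_le_exp (c ^ 2)]

/-- Exponential moment of the sum of `k` centered samples, restricted to the event that the
`t₀`-th sample is `θ`. -/
lemma sum_prod_mul_ite_mul_exp_le {Θ : Type*} [Fintype Θ] [DecidableEq Θ] {k : ℕ} {p f : Θ → ℝ}
    (hp0 : ∀ x, 0 ≤ p x) (hp1 : ∑ x, p x = 1) (hf : ∀ x, |f x| ≤ 1)
    (hmean : ∑ x, p x * f x = 0) {c : ℝ} (hc : |c| ≤ 1) (t₀ : Fin k) (θ : Θ) :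
    ∑ s : Fin k → Θ, (∏ t, p (s t)) * (if s t₀ = θ then 1 else 0) *
        Real.exp (c * ∑ t, f (s t)) ≤
      p θ * Real.exp (|c| + k * c ^ 2) := by
  have htilt : ∀ s : Fin k → Θ, (∏ t, p (s t)) * (if s t₀ = θ then 1 else 0) *
      Real.exp (c * ∑ t, f (s t)) =
      (∏ t, p (s t) * Real.exp (c * f (s t))) * (if s t₀ = θ then 1 else 0) := by
    intro s
    rw [Finset.prod_mul_distrib, Finset.mul_sum, Real.exp_sum]
    ring
  have hsingle : Real.exp (c * f θ) ≤ Real.exp |c| := by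
    refine Real.exp_le_exp.mpr ((le_abs_self _).trans ?_)
    rw [abs_mul]
    exact mul_le_of_le_one_right (abs_nonneg c) (hf θ)
  have hone : 1 ≤ Real.exp (c ^ 2) := Real.one_le_exp (sq_nonneg c)
  rw [Finset.sum_congr rfl fun s _ => htilt s,
    sum_prod_mul_ite_eq_prod (fun x => p x * Real.exp (c * f x))]
  calc ∏ t, (if t = t₀ then p θ * Real.exp (c * f θ) else ∑ x, p x * Real.exp (c * f x))
      ≤ ∏ t : Fin k, (if t = t₀ then p θ * Real.exp |c| else 1) * Real.exp (c ^ 2) := by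
        refine Finset.prod_le_prod (fun t _ => ?_) fun t _ => ?_
        · split_ifs
          · exact mul_nonneg (hp0 θ) (Real.exp_nonneg _)
          · exact Finset.sum_nonneg fun x _ => mul_nonneg (hp0 x) (Real.exp_nonneg _)
        · split_ifs
          · exact (mul_le_mul_of_nonneg_left hsingle (hp0 θ)).trans
              (le_mul_of_one_le_right (mul_nonneg (hp0 θ) (Real.exp_nonneg _)) hone)
          · rw [one_mul]
            exact sum_mul_exp_le_exp_sq hp0 hp1 hf hmean hc
    _ = p θ * Real.exp (|c| + k * c ^ 2) := by
        rw [Finset.prod_mul_distrib, Finset.prod_ite_eq' Finset.univ t₀, Finset.prod_const,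
          Real.exp_add, Real.exp_nat_mul]
        simp [mul_assoc]

/-- Restricting to sample vectors along which finitely many centered statistics all stay below the
threshold `b` loses at most a Chernoff-type fraction of the mass of the event that the `t₀`-th
sample is `θ`. -/
lemma mul_le_sum_filter_prod_mul_ite {Θ ι : Type*} [Fintype Θ] [DecidableEq Θ] [Fintype ι] {k : ℕ}
    {p : Θ → ℝ} (hp0 : ∀ x, 0 ≤ p x) (hp1 : ∑ x, p x = 1) {f : ι → Θ → ℝ}
    (hf : ∀ i x, |f i x| ≤ 1) (hmean : ∀ i, ∑ x, p x * f i x = 0)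
    {c : ℝ} (hc0 : 0 ≤ c) (hc1 : c ≤ 1) (b : ℝ) (S : Finset (Fin k → Θ))
    (hS : ∀ s, (∀ i, |∑ t, f i (s t)| ≤ b) → s ∈ S) (t₀ : Fin k) (θ : Θ) :
    (1 - Fintype.card ι * (2 * Real.exp (c + k * c ^ 2 - c * b))) * p θ ≤
      ∑ s ∈ S, (∏ t, p (s t)) * (if s t₀ = θ then 1 else 0) := by
  classical
  set w : (Fin k → Θ) → ℝ := fun s => (∏ t, p (s t)) * (if s t₀ = θ then 1 else 0) with hw
  have hw0 : ∀ s, 0 ≤ w s := fun s =>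
    mul_nonneg (Finset.prod_nonneg fun t _ => hp0 _) (by split_ifs <;> norm_num)
  have hwsum : ∑ s, w s = p θ := by
    rw [hw, sum_prod_mul_ite_eq_prod p, hp1, Finset.prod_ite_eq' Finset.univ t₀]
    simp
  set e : ι → (Fin k → Θ) → ℝ := fun i s => Real.exp (-(c * b)) *
    (Real.exp (c * ∑ t, f i (s t)) + Real.exp (-c * ∑ t, f i (s t))) with he
  have he0 : ∀ i s, 0 ≤ e i s := fun i s => by positivity
  have hpoint : ∀ s, w s - ∑ i, w s * e i s ≤ if s ∈ S then w s else 0 := by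
    intro s
    split_ifs with hs
    · exact sub_le_self _ (Finset.sum_nonneg fun i _ => mul_nonneg (hw0 s) (he0 i s))
    · have hbad : ∃ i, b < |∑ t, f i (s t)| := by
        by_contra! h
        exact hs (hS s h)
      obtain ⟨i, hi⟩ := hbad
      have hei : 1 ≤ e i s := by
        simp only [he, mul_add, ← Real.exp_add]
        rcases lt_abs.mp hi with h | h
        · have : 1 ≤ Real.exp (-(c * b) + c * ∑ t, f i (s t)) :=
            Real.one_le_exp (by nlinarith)
          linarith [Real.exp_pos (-(c * b) + -c * ∑ t, f i (s t))]
        · have : 1 ≤ Real.exp (-(c * b) + -c * ∑ t, f i (s t)) :=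
            Real.one_le_exp (by nlinarith)
          linarith [Real.exp_pos (-(c * b) + c * ∑ t, f i (s t))]
      have hsum : w s * e i s ≤ ∑ i, w s * e i s :=
        Finset.single_le_sum (f := fun i => w s * e i s)
          (fun j _ => mul_nonneg (hw0 s) (he0 j s)) (Finset.mem_univ i)
      linarith [le_mul_of_one_le_right (hw0 s) hei]
  have htail : ∀ i, ∑ s, w s * e i s ≤ 2 * Real.exp (c + k * c ^ 2 - c * b) * p θ := by
    intro i
    have habs : |c| = c := abs_of_nonneg hc0
    have hpos := sum_prod_mul_ite_mul_exp_le hp0 hp1 (hf i) (hmean i) (c := c)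
      (by rwa [habs]) t₀ θ
    have hneg := sum_prod_mul_ite_mul_exp_le hp0 hp1 (hf i) (hmean i) (c := -c)
      (by rwa [abs_neg, habs]) t₀ θ
    rw [abs_neg, neg_sq, habs] at hneg
    rw [habs] at hpos
    calc ∑ s, w s * e i s
        = Real.exp (-(c * b)) * (∑ s, w s * Real.exp (c * ∑ t, f i (s t)) +
            ∑ s, w s * Real.exp (-c * ∑ t, f i (s t))) := by
          rw [← Finset.sum_add_distrib, Finset.mul_sum]
          exact Finset.sum_congr rfl fun s _ => by simp only [he]; ring
      _ ≤ Real.exp (-(c * b)) * (p θ * Real.exp (c + k * c ^ 2) +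
            p θ * Real.exp (c + k * c ^ 2)) :=
          mul_le_mul_of_nonneg_left (add_le_add hpos hneg) (Real.exp_nonneg _)
      _ = 2 * Real.exp (c + k * c ^ 2 - c * b) * p θ := by
          rw [sub_eq_add_neg, Real.exp_add _ (-(c * b))]
          ring
  calc (1 - Fintype.card ι * (2 * Real.exp (c + k * c ^ 2 - c * b))) * p θ
      = p θ - ∑ _i : ι, 2 * Real.exp (c + k * c ^ 2 - c * b) * p θ := by
        rw [Finset.sum_const, Finset.card_univ, nsmul_eq_mul]
        ring
    _ ≤ ∑ s, w s - ∑ i, ∑ s, w s * e i s := by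
        rw [hwsum]
        exact sub_le_sub_left (Finset.sum_le_sum fun i _ => htail i) _
    _ = ∑ s, (w s - ∑ i, w s * e i s) := by
        rw [Finset.sum_comm, Finset.sum_sub_distrib]
    _ ≤ ∑ s, if s ∈ S then w s else 0 := Finset.sum_le_sum fun s _ => hpoint s
    _ = ∑ s ∈ S, w s := by simp [Finset.sum_ite_mem]

lemma empDist_eq_sum_div {Θ : Type*} [Fintype Θ] [DecidableEq Θ] {k : ℕ}
    (s : Fin k → Θ) (θ : Θ) :
    empDist s θ = (∑ t, if s t = θ then 1 else 0) / k := by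
  simp [empDist]

lemma sum_empDist_mul {Θ : Type*} [Fintype Θ] [DecidableEq Θ] {k : ℕ}
    (s : Fin k → Θ) (v : Θ → ℝ) :
    ∑ x, empDist s x * v x = (∑ t, v (s t)) / k := by
  simp_rw [empDist_eq_sum_div, div_mul_eq_mul_div, ← Finset.sum_div, Finset.sum_mul]
  rw [Finset.sum_comm]
  simp

/-- Lemma 13, `lm:bicriteria_3`.
Let `γ̃` be the empirical distribution of `k` i.i.d. samples from `pstar`, where
`k = ⌈32·ln(4 n̄ ϱ/δ)/ε²⌉`, and let `P` be the set of posteriors whose induced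
expected utilities are `ε/2`-close to those of `pstar` for every receiver and action.
Then for every `θ`, `E[γ̃_θ · 1{γ̃ ∈ P}] ≥ (1 − δ)·pstar θ`.
The expectation is expressed as a sum of the product weights `∏ t, pstar (s t)` over
the sample vectors `s : Fin k → Θ` whose empirical distribution lies in `P`. -/
theorem bicriteria_3
    {Θ R : Type*} [Fintype Θ] [DecidableEq Θ] [Nonempty Θ] [Fintype R]
    (A : R → Type*) [∀ r, Fintype (A r)] [∀ r, Nonempty (A r)]
    (nbar ϱ : ℕ) (hcard : Fintype.card R = nbar) (hn2 : 2 ≤ nbar)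
    (hϱ : ∀ r, Fintype.card (A r) ≤ ϱ) (hϱ2 : 2 ≤ ϱ)
    (u : (r : R) → A r → Θ → ℝ)
    (hu : ∀ r (a : A r) (θ : Θ), u r a θ ∈ Set.Icc (0 : ℝ) 1)
    (ε δ : ℝ) (hε0 : 0 < ε) (hε1 : ε ≤ 1) (hδ0 : 0 < δ) (hδ1 : δ ≤ 1)
    (k : ℕ) (hk : k = ⌈32 * Real.log (4 * nbar * ϱ / δ) / ε ^ 2⌉₊)
    (pstar : Θ → ℝ) (hp0 : ∀ θ, 0 ≤ pstar θ) (hp1 : ∑ θ, pstar θ = 1)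
    (θ : Θ) :
    (1 - δ) * pstar θ ≤
      ∑ s ∈ Finset.univ.filter (fun s : Fin k → Θ =>
            ∀ r (a : A r),
              |(∑ θ', empDist s θ' * u r a θ') - ∑ θ', pstar θ' * u r a θ'| ≤ ε / 2),
          (∏ t, pstar (s t)) * empDist s θ := by
  have hnϱ : (4 : ℝ) ≤ nbar * ϱ := by
    have : 4 ≤ nbar * ϱ := Nat.mul_le_mul hn2 hϱ2
    exact_mod_cast this
  set L := Real.log (4 * nbar * ϱ / δ) with hL
  have hratio : 16 ≤ 4 * nbar * ϱ / δ := by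
    rw [le_div_iff₀ hδ0]
    nlinarith
  have hratio0 : 0 < 4 * nbar * ϱ / δ := lt_of_lt_of_le (by norm_num) hratio
  have hexpL : Real.exp (-L) * (4 * (nbar * ϱ)) = δ := by
    rw [hL, Real.exp_neg, Real.exp_log hratio0]
    field_simp
  have hL1 : 1 ≤ L := by
    rw [hL, Real.le_log_iff_exp_le hratio0]
    exact Real.exp_one_lt_three.le.trans (le_trans (by norm_num) hratio)
  have hkL : 32 * L ≤ k * ε ^ 2 := by
    rw [← div_le_iff₀ (by positivity), hk]
    exact Nat.le_ceil _
  have hk0 : (0 : ℝ) < k := by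
    by_contra! h
    nlinarith [sq_nonneg ε]
  have hmem : ∀ r (a : A r), ∑ x, pstar x * u r a x ∈ Set.Icc (0 : ℝ) 1 := by
    refine fun r a => ⟨Finset.sum_nonneg fun x _ => mul_nonneg (hp0 x) (hu r a x).1, ?_⟩
    rw [← hp1]
    exact Finset.sum_le_sum fun x _ => mul_le_of_le_one_right (hp0 x) (hu r a x).2
  let f : (Σ r, A r) → Θ → ℝ := fun i x => u i.1 i.2 x - ∑ y, pstar y * u i.1 i.2 y
  have hf : ∀ i x, |f i x| ≤ 1 := fun i x => by
    have h₁ := hu i.1 i.2 x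
    have h₂ := hmem i.1 i.2
    exact abs_le.mpr ⟨by linarith [h₁.1, h₂.2], by linarith [h₁.2, h₂.1]⟩
  have hmean : ∀ i, ∑ x, pstar x * f i x = 0 := fun i => by
    simp only [f, mul_sub, Finset.sum_sub_distrib, ← Finset.sum_mul, hp1, one_mul, sub_self]
  have hcardι : (Fintype.card (Σ r, A r) : ℝ) ≤ nbar * ϱ := by
    have : Fintype.card (Σ r, A r) ≤ nbar * ϱ := by
      rw [Fintype.card_sigma, ← hcard]
      simpa using Finset.sum_le_card_nsmul Finset.univ (fun r => Fintype.card (A r)) ϱ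
        fun r _ => hϱ r
    exact_mod_cast this
  have hloss : Fintype.card (Σ r, A r) *
      (2 * Real.exp (ε / 4 + k * (ε / 4) ^ 2 - ε / 4 * (k * (ε / 2)))) ≤ δ := by
    have hexp : Real.exp (ε / 4 + k * (ε / 4) ^ 2 - ε / 4 * (k * (ε / 2))) ≤ Real.exp (-L) :=
      Real.exp_le_exp.mpr (by nlinarith)
    calc _ ≤ nbar * ϱ * (2 * Real.exp (-L)) := by gcongr
      _ ≤ δ := by linarith
  set S := Finset.univ.filter (fun s : Fin k → Θ => ∀ r (a : A r),
    |(∑ θ', empDist s θ' * u r a θ') - ∑ θ', pstar θ' * u r a θ'| ≤ ε / 2)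
  have hS : ∀ s, (∀ i, |∑ t, f i (s t)| ≤ k * (ε / 2)) → s ∈ S := by
    intro s hs
    refine Finset.mem_filter.mpr ⟨Finset.mem_univ _, fun r a => ?_⟩
    have hdev : (∑ x, empDist s x * u r a x) - ∑ x, pstar x * u r a x =
        (∑ t, f ⟨r, a⟩ (s t)) / k := by
      rw [sum_empDist_mul]
      simp only [f, Finset.sum_sub_distrib, Finset.sum_const, Finset.card_univ, Fintype.card_fin,
        nsmul_eq_mul]
      field_simp
    rw [hdev, abs_div, abs_of_pos hk0, div_le_iff₀ hk0, mul_comm]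
    exact hs ⟨r, a⟩
  have hsample : ∀ t₀ : Fin k, (1 - δ) * pstar θ ≤
      ∑ s ∈ S, (∏ t, pstar (s t)) * (if s t₀ = θ then 1 else 0) := fun t₀ =>
    (mul_le_mul_of_nonneg_right (sub_le_sub_left hloss 1) (hp0 θ)).trans
      (mul_le_sum_filter_prod_mul_ite hp0 hp1 hf hmean (by linarith) (by linarith) _ S hS t₀ θ)
  calc (1 - δ) * pstar θ = (∑ _t₀ : Fin k, (1 - δ) * pstar θ) / k := by
        rw [Finset.sum_const, Finset.card_univ, Fintype.card_fin, nsmul_eq_mul,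
          mul_div_cancel_left₀ _ hk0.ne']
    _ ≤ (∑ t₀ : Fin k, ∑ s ∈ S, (∏ t, pstar (s t)) * (if s t₀ = θ then 1 else 0)) / k := by
        gcongr with t₀
        exact hsample t₀
    _ = ∑ s ∈ S, (∏ t, pstar (s t)) * empDist s θ := by
        rw [Finset.sum_comm, Finset.sum_div]
        refine Finset.sum_congr rfl fun s _ => ?_
        rw [empDist_eq_sum_div, ← Finset.mul_sum, mul_div_assoc]
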